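/- The polynomial r₃(x) = x⁸ − 17x⁷ + 117x⁶ − 418x⁵ + 827x⁴ − 898x³ + 502x² − 124x + 9 is irreducible over ℚ and has Galois group S₈ over ℚ. -/

import Mathlib

open Polynomial

/-!
Irreducibility: modulo `2` every nonconstant factor of `r₃` has degree at least `4`, while modulo
`3` there is an irreducible factor of degree `6`; a nontrivial factorization would have to be
`4 + 4` by the first fact, which leaves no room for the second.

Galois group: the ideal `(r₃, r₃')` of `ℤ[X]` contains a linear polynomial with coprime
coefficients, so modulo each prime at most two roots of `r₃` come together. An element of an
inertia group fixes the roots modulo a prime, hence acts on the roots of `r₃` as the identity or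
as a transposition. By Minkowski's theorem the inertia groups generate the Galois group, and a
transitive group generated by transpositions is the full symmetric group.
-/

open NumberField

section FactorDegrees

variable {F : Type*} [Field F] [Finite F] {f g : F[X]} {m : ℕ}

theorem lt_natDegree_of_isCoprime_X_pow_card_pow_sub_X (hf0 : f ≠ 0)
    (hf : ∀ n, 0 < n → n ≤ m → IsCoprime f (X ^ Nat.card F ^ n - X)) (hgf : g ∣ f)
    (hg : ¬IsUnit g) : m < g.natDegree := by
  have hg0 : g ≠ 0 := ne_zero_of_dvd_ne_zero hf0 hgf
  obtain ⟨p, hp, hpg⟩ := WfDvdMonoid.exists_irreducible_factor hg hg0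
  refine lt_of_lt_of_le ?_ (natDegree_le_of_dvd hpg hg0)
  by_contra! hpm
  exact hp.not_isUnit <| (hf _ hp.natDegree_pos hpm).isUnit_of_dvd' (hpg.trans hgf)
    (hp.natDegree_dvd_iff_dvd_X_pow_card_pow_sub_X.mp dvd_rfl)

theorem irreducible_of_isCoprime_X_pow_card_pow_sub_X
    (hf : ∀ n, 0 < n → n ≤ m → IsCoprime f (X ^ Nat.card F ^ n - X)) (h0 : 0 < f.natDegree)
    (hm : f.natDegree < 2 * (m + 1)) : Irreducible f := by
  refine ⟨fun hu ↦ h0.ne' (natDegree_eq_zero_of_isUnit hu), fun a b hab ↦ ?_⟩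
  have hf0 : f ≠ 0 := ne_zero_of_natDegree_gt h0
  by_contra! hu
  have ha := lt_natDegree_of_isCoprime_X_pow_card_pow_sub_X hf0 hf (Dvd.intro _ hab.symm) hu.1
  have hb := lt_natDegree_of_isCoprime_X_pow_card_pow_sub_X hf0 hf (Dvd.intro_left _ hab.symm) hu.2
  rw [hab, natDegree_mul (left_ne_zero_of_mul (hab ▸ hf0)) (right_ne_zero_of_mul (hab ▸ hf0))] at hm
  lia

end FactorDegrees

theorem irreducible_of_map_of_map {R k l : Type*} [CommRing R] [IsDomain R] [CommRing k]
    [IsDomain k] [CommRing l] [IsDomain l] {f : R[X]} {s : l[X]} {n : ℕ} (φ : R →+* k)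
    (ψ : R →+* l) (hf : f.Monic) (hn : f.natDegree ≤ 2 * n)
    (hφ : ∀ g, g ∣ f.map φ → ¬IsUnit g → n ≤ g.natDegree) (hs : Prime s) (hsf : s ∣ f.map ψ)
    (hns : n < s.natDegree) : Irreducible f := by
  refine hf.irreducible_iff_natDegree'.mpr ⟨?_, fun g h hg hh hgh hmem ↦ ?_⟩
  · rintro rfl
    exact hs.not_isUnit (isUnit_of_dvd_one (by simpa using hsf))
  obtain ⟨h0, hle⟩ := Finset.mem_Ioc.mp hmem
  have hdeg : f.natDegree = g.natDegree + h.natDegree := by rw [← hgh, hg.natDegree_mul hh]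
  have hnh : n ≤ h.natDegree := by
    rw [← hh.natDegree_map φ] at h0 ⊢
    refine hφ (h.map φ) (Dvd.intro_left (g.map φ) (by rw [← Polynomial.map_mul, hgh])) fun hu ↦ ?_
    exact h0.ne' (natDegree_eq_zero_of_isUnit hu)
  rw [← hgh, Polynomial.map_mul] at hsf
  rcases hs.dvd_or_dvd hsf with hsg | hsh
  · have := natDegree_le_of_dvd hsg (hg.map ψ).ne_zero
    rw [hg.natDegree_map] at this
    lia
  · have := natDegree_le_of_dvd hsh (hh.map ψ).ne_zero
    rw [hh.natDegree_map] at this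
    lia

section Inertia

theorem card_inertia_eq_ramificationIdx {R S G : Type*} [CommRing R] [IsDomain R] [CommRing S]
    [IsDomain S] [Algebra R S] [Module.Finite R S] [Module.Flat R S] [Group G] [Finite G]
    [MulSemiringAction G S] [IsGaloisGroup G R S] (Q : Ideal S) [Q.IsPrime]
    [PerfectField (Q.under R).ResidueField] :
    Nat.card (Q.inertia G) = Q.ramificationIdx R := by
  rw [Ideal.card_inertia_eq_ramificationIdxIn (Q.under R) Q,
    Ideal.ramificationIdxIn_eq_ramificationIdx (Q.under R) Q G]

theorem ramificationIdx_under_eq_one_of_inertia_le (R T : Type*) {S G : Type*} [CommRing R]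
    [IsDomain R] [CommRing T] [IsDomain T] [CommRing S] [IsDomain S] [Algebra R T] [Algebra T S]
    [Algebra R S] [IsScalarTower R T S] [Module.Finite R S] [Module.Flat R S] [Module.Finite T S]
    [Module.Flat T S] [Group G] [Finite G] [MulSemiringAction G S] [IsGaloisGroup G R S]
    {H : Subgroup G} [IsGaloisGroup H T S] {Q : Ideal S} [Q.IsPrime]
    [PerfectField (Q.under R).ResidueField] [PerfectField (Q.under T).ResidueField]
    (hQ : Q.inertia G ≤ H) : (Q.under T).ramificationIdx R = 1 := by
  have hcard : Nat.card (Q.inertia H) = Nat.card (Q.inertia G) :=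
    Nat.card_congr (Subgroup.subgroupOfEquivOfLe hQ).toEquiv
  have hpos : 0 < Nat.card (Q.inertia H) := Nat.card_pos
  rw [card_inertia_eq_ramificationIdx (R := T)] at hcard hpos
  rw [card_inertia_eq_ramificationIdx (R := R),
    Ideal.ramificationIdx_tower (R := R) (Q.under T) Q] at hcard
  exact Nat.eq_of_mul_eq_mul_right hpos (by rw [one_mul, ← hcard])

/- The fixed field of the subgroup generated by the inertia groups is unramified over `ℚ`, hence
equal to `ℚ` by Minkowski's theorem. -/
theorem iSup_inertia_eq_top (K : Type*) [Field K] [NumberField K] [IsGalois ℚ K] :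
    ⨆ m : MaximalSpectrum (𝓞 K), m.asIdeal.inertia Gal(K/ℚ) = ⊤ := by
  set H := ⨆ m : MaximalSpectrum (𝓞 K), m.asIdeal.inertia Gal(K/ℚ)
  let L := FixedPoints.intermediateField (F := ℚ) (E := K) H
  have : IsGaloisGroup H L K := .subgroup Gal(K/ℚ) ℚ K H
  have : IsGaloisGroup H (𝓞 L) (𝓞 K) := .of_isFractionRing H (𝓞 L) (𝓞 K) L K
  have hL : Module.finrank ℚ L = 1 := by
    by_contra hL
    obtain ⟨P, _, hP⟩ := exists_not_isUnramifiedAt_int (𝒪 := 𝓞 L) hL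
    obtain ⟨Q, hQ, _⟩ := Ideal.exists_maximal_ideal_liesOver_of_isIntegral (S := 𝓞 K) P
    have hQH : Q.inertia Gal(K/ℚ) ≤ H :=
      le_iSup (fun m : MaximalSpectrum (𝓞 K) ↦ m.asIdeal.inertia Gal(K/ℚ)) ⟨Q, hQ⟩
    rw [← Ideal.ramificationIdx_eq_one_iff, Ideal.LiesOver.over (P := Q) (p := P)] at hP
    exact hP (ramificationIdx_under_eq_one_of_inertia_le ℤ (𝓞 L) hQH)
  refine Subgroup.eq_top_of_card_eq H ?_
  rw [IsGaloisGroup.card_eq_finrank H L K, IsGaloisGroup.card_eq_finrank Gal(K/ℚ) ℚ K,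
    ← Module.finrank_mul_finrank ℚ L K, hL, one_mul]

end Inertia

section RootCollisions

/- A root of `f` of multiplicity `e` is a root of `f` and `f'`, hence of `l`, of multiplicity at
least `e - 1`. -/
theorem card_roots_le_card_toFinset_roots_add_natDegree {k : Type*} [CommRing k] [IsDomain k]
    [DecidableEq k] {f l : k[X]} (hl : l ≠ 0) (hlf : l ∈ Ideal.span {f, derivative f}) :
    f.roots.card ≤ f.roots.toFinset.card + l.natDegree := by
  obtain ⟨A, B, rfl⟩ := Ideal.mem_span_pair.mp hlf
  have hle : f.roots ≤ f.roots.dedup + (A * f + B * derivative f).roots := by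
    refine Multiset.le_iff_count.mpr fun a ↦ ?_
    have hpow := pow_rootMultiplicity_dvd f a
    have hdvd : (X - C a) ^ (f.rootMultiplicity a - 1) ∣ A * f + B * derivative f :=
      dvd_add (((pow_dvd_pow _ (Nat.sub_le _ _)).trans hpow).mul_left A)
        ((pow_sub_one_dvd_derivative_of_pow_dvd hpow).mul_left B)
    have hmult := (le_rootMultiplicity_iff hl).mpr hdvd
    have hdedup : f.roots.count a ≠ 0 → 1 ≤ f.roots.dedup.count a := fun ha ↦
      Multiset.one_le_count_iff_mem.mpr (Multiset.mem_dedup.mpr (Multiset.count_ne_zero.mp ha))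
    rw [Multiset.count_add, count_roots (A * f + _)]
    rw [count_roots] at hdedup ⊢
    lia
  calc f.roots.card
      ≤ f.roots.toFinset.card + (A * f + B * derivative f).roots.card :=
        (Multiset.card_le_card hle).trans_eq (Multiset.card_add _ _)
    _ ≤ _ := by gcongr; exact card_roots' _

theorem natDegree_le_ncard_rootSet_add_one {R k : Type*} [CommRing R] [CommRing k] [IsDomain k]
    [Algebra R k] {f : R[X]} {u v : R} (hf : f.Monic) (huv : IsCoprime u v)
    (hspan : C u * X + C v ∈ Ideal.span {f, derivative f})
    (hk : (f.map (algebraMap R k)).Splits) : f.natDegree ≤ (f.rootSet k).ncard + 1 := by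
  classical
  set φ := algebraMap R k
  have hl : C (φ u) * X + C (φ v) ≠ 0 := fun h0 ↦ by
    have hu : φ u = 0 := by simpa using congr_arg (coeff · 1) h0
    have hv : φ v = 0 := by simpa using congr_arg (coeff · 0) h0
    exact not_isCoprime_zero_zero (by simpa only [hu, hv] using huv.map φ)
  have hspan' : C (φ u) * X + C (φ v) ∈ Ideal.span {f.map φ, derivative (f.map φ)} := by
    simpa [Ideal.map_span, Set.image_pair] using Ideal.mem_map_of_mem (mapRingHom φ) hspan
  calc f.natDegree = (f.map φ).roots.card := by
        rw [← hk.natDegree_eq_card_roots, hf.natDegree_map]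
    _ ≤ (f.map φ).roots.toFinset.card + (C (φ u) * X + C (φ v)).natDegree :=
        card_roots_le_card_toFinset_roots_add_natDegree hl hspan'
    _ ≤ (f.rootSet k).ncard + 1 := by
        rw [rootSet_def, Set.ncard_coe_finset, aroots_def]
        gcongr
        exact natDegree_linear_le

end RootCollisions

section RootsInIntegralClosure

variable {R S L : Type*} [CommRing R] [CommRing S] [Algebra R S] {f : R[X]}

theorem splits_map_of_isIntegralClosure [CommRing L] [IsDomain L] [Algebra R L] [Algebra S L]
    [IsScalarTower R S L] [IsIntegralClosure S R L] (hf : f.Monic)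
    (hL : (f.map (algebraMap R L)).Splits) : (f.map (algebraMap R S)).Splits := by
  rw [IsScalarTower.algebraMap_eq R S L, ← map_map] at hL
  refine hL.of_splits_map_of_injective (IsIntegralClosure.algebraMap_injective S R L) fun a ha ↦ ?_
  rw [map_map, ← IsScalarTower.algebraMap_eq] at ha
  exact IsIntegralClosure.isIntegral_iff.mp ⟨f, hf, by simpa [aeval_def] using (mem_roots'.mp ha).2⟩

theorem ncard_rootSet_eq_natDegree [IsDomain S] [Field L] [Algebra R L] [Algebra S L]
    [IsScalarTower R S L] [FaithfulSMul S L] (hf : f.Monic)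
    (hS : (f.map (algebraMap R S)).Splits) (hsep : (f.map (algebraMap R L)).Separable) :
    (f.rootSet S).ncard = f.natDegree := by
  classical
  have hnodup : (f.aroots S).Nodup := by
    refine .of_map (algebraMap S L) ?_
    rw [aroots_def, ← hS.roots_map_of_injective (FaithfulSMul.algebraMap_injective S L), map_map,
      ← IsScalarTower.algebraMap_eq]
    exact nodup_roots hsep
  rw [rootSet_def, Set.ncard_coe_finset, Multiset.toFinset_card_of_nodup hnodup, aroots_def,
    ← hS.natDegree_eq_card_roots, hf.natDegree_map]

end RootsInIntegralClosure

theorem isPretransitive_rootSet_ringOfIntegers (K : Type*) [Field K] [NumberField K] [IsGalois ℚ K]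
    {f : ℤ[X]} (hf : f.Monic) (hirr : Irreducible (f.map (algebraMap ℤ ℚ))) :
    MulAction.IsPretransitive Gal(K/ℚ) (f.rootSet (𝓞 K)) where
  exists_smul_eq x y := by
    have hminpoly (z : f.rootSet (𝓞 K)) : f.map (algebraMap ℤ ℚ) = minpoly ℚ ((z : 𝓞 K) : K) := by
      refine minpoly.eq_of_irreducible_of_monic hirr ?_ (hf.map _)
      rw [aeval_map_algebraMap, aeval_algebraMap_apply, aeval_eq_zero_of_mem_rootSet z.2, map_zero]
    obtain ⟨σ, hσ⟩ :=
      (Normal.minpoly_eq_iff_mem_orbit K).mp ((hminpoly y).symm.trans (hminpoly x))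
    exact ⟨σ, Subtype.ext (RingOfIntegers.ext hσ)⟩

theorem nonempty_gal_mulEquiv_perm_of_factorial_le_finrank {F : Type*} [Field F] {p : F[X]}
    (hsep : p.Separable) (hp : p.natDegree.factorial ≤ Module.finrank F p.SplittingField) :
    Nonempty (p.Gal ≃* Equiv.Perm (Fin p.natDegree)) := by
  have : Fact (p.map (algebraMap F p.SplittingField)).Splits := ⟨SplittingField.splits p⟩
  have hroots : Nat.card (p.rootSet p.SplittingField) = p.natDegree := by
    rw [Nat.card_eq_fintype_card, card_rootSet_eq_natDegree hsep (SplittingField.splits p)]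
  have hinj := Gal.galActionHom_injective p p.SplittingField
  have hbij : Function.Bijective (Gal.galActionHom p p.SplittingField) := by
    refine (Nat.bijective_iff_injective_and_card _).mpr
      ⟨hinj, (Nat.card_le_card_of_injective _ hinj).antisymm ?_⟩
    rwa [Nat.card_perm, hroots, Gal.card_of_separable hsep]
  exact ⟨(MulEquiv.ofBijective _ hbij).trans (Finite.equivFinOfCardEq hroots).permCongrHom⟩

section GaloisGroup

variable {f : ℤ[X]} {u v : ℤ} (hf : f.Monic) (hirr : Irreducible (f.map (algebraMap ℤ ℚ)))
  (huv : IsCoprime u v) (hspan : C u * X + C v ∈ Ideal.span {f, derivative f})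
include hf hirr huv hspan

theorem surjective_toPermHom_rootSet_ringOfIntegers {K : Type*} [Field K] [NumberField K]
    [IsGalois ℚ K] (hS : (f.map (algebraMap ℤ (𝓞 K))).Splits) :
    Function.Surjective (MulAction.toPermHom Gal(K/ℚ) (f.rootSet (𝓞 K))) := by
  classical
  have := isPretransitive_rootSet_ringOfIntegers K hf hirr
  refine hS.surjective_toPermHom_of_iSup_inertia_eq_top (fun m ↦ ?_) (iSup_inertia_eq_top K)
  have hm : (f.map (algebraMap ℤ (𝓞 K ⧸ m.asIdeal))).Splits := by
    rw [IsScalarTower.algebraMap_eq ℤ (𝓞 K), ← map_map]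
    exact hS.map _
  calc (f.rootSet (𝓞 K)).ncard ≤ (f.aroots (𝓞 K)).card := by
        rw [rootSet_def, Set.ncard_coe_finset]
        exact Multiset.toFinset_card_le _
    _ ≤ f.natDegree := (card_roots' _).trans natDegree_map_le
    _ ≤ _ := natDegree_le_ncard_rootSet_add_one hf huv hspan hm

theorem factorial_natDegree_le_finrank (K : Type*) [Field K] [CharZero K] [inst : Algebra ℚ K]
    [IsSplittingField ℚ K (f.map (algebraMap ℤ ℚ))] :
    f.natDegree.factorial ≤ Module.finrank ℚ K := by
  -- `NumberField` and `𝓞` use the canonical `ℚ`-algebra structure.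
  obtain rfl : inst = DivisionRing.toRatAlgebra := Subsingleton.elim _ _
  have : NumberField K :=
    { to_finiteDimensional := IsSplittingField.finiteDimensional K (f.map (algebraMap ℤ ℚ)) }
  have : IsGalois ℚ K := IsGalois.of_separable_splitting_field hirr.separable
  have hK := IsSplittingField.splits K (f.map (algebraMap ℤ ℚ))
  have hsep := hirr.separable.map (f := algebraMap ℚ K)
  rw [map_map, ← IsScalarTower.algebraMap_eq] at hK hsep
  have hS : (f.map (algebraMap ℤ (𝓞 K))).Splits := splits_map_of_isIntegralClosure hf hK
  calc f.natDegree.factorial = Nat.card (Equiv.Perm (f.rootSet (𝓞 K))) := by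
        rw [Nat.card_perm, Nat.card_coe_set_eq, ncard_rootSet_eq_natDegree hf hS hsep]
    _ ≤ Nat.card Gal(K/ℚ) := Nat.card_le_card_of_surjective _
        (surjective_toPermHom_rootSet_ringOfIntegers hf hirr huv hspan hS)
    _ = Module.finrank ℚ K := IsGalois.card_aut_eq_finrank ℚ K

theorem nonempty_gal_mulEquiv_perm_of_linear_mem_span :
    Nonempty ((f.map (algebraMap ℤ ℚ)).Gal ≃* Equiv.Perm (Fin f.natDegree)) := by
  have : CharZero (f.map (algebraMap ℤ ℚ)).SplittingField := algebraRat.charZero _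
  have hperm := nonempty_gal_mulEquiv_perm_of_factorial_le_finrank hirr.separable
  rw [hf.natDegree_map] at hperm
  exact hperm (factorial_natDegree_le_finrank hf hirr huv hspan _)

end GaloisGroup

section TheOctic

/-- The polynomial `r₃` of the theorem over `ℤ`, so that it can be reduced modulo primes. -/
noncomputable def r₃ : ℤ[X] :=
  X ^ 8 - 17 * X ^ 7 + 117 * X ^ 6 - 418 * X ^ 5 + 827 * X ^ 4 - 898 * X ^ 3 + 502 * X ^ 2
    - 124 * X + 9

theorem natDegree_r₃ : r₃.natDegree = 8 := by
  unfold r₃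
  compute_degree!

theorem monic_r₃ : r₃.Monic := by
  unfold r₃
  monicity!

theorem derivative_r₃ : derivative r₃ = 8 * X ^ 7 - 119 * X ^ 6 + 702 * X ^ 5 - 2090 * X ^ 4
    + 3308 * X ^ 3 - 2694 * X ^ 2 + 1004 * X - 124 := by
  simp only [r₃, derivative_sub, derivative_mul, derivative_X_pow_succ,
    derivative_ofNat, derivative_X, Nat.cast_ofNat, Nat.cast_one, map_add, map_one, map_ofNat]
  ring

theorem map_r₃ {R : Type*} [Ring R] (φ : ℤ →+* R) :
    r₃.map φ = X ^ 8 - 17 * X ^ 7 + 117 * X ^ 6 - 418 * X ^ 5 + 827 * X ^ 4 - 898 * X ^ 3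
      + 502 * X ^ 2 - 124 * X + 9 := by
  simp [r₃]

theorem map_r₃_zmod_two :
    r₃.map (Int.castRingHom (ZMod 2)) = X ^ 8 + X ^ 7 + X ^ 6 + X ^ 4 + 1 := by
  rw [map_r₃]
  reduce_mod_char

theorem map_r₃_zmod_three : r₃.map (Int.castRingHom (ZMod 3)) =
    X * (X + 1) * (X ^ 6 - X ^ 3 - X - 1) := by
  have h3 : (3 : (ZMod 3)[X]) = 0 := CharP.ofNat_eq_zero _ 3
  rw [map_r₃]
  linear_combination (-6 * X ^ 7 + 39 * X ^ 6 - 139 * X ^ 5 + 276 * X ^ 4 - 299 * X ^ 3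
    + 168 * X ^ 2 - 41 * X + 3) * h3

theorem isCoprime_map_r₃_zmod_two {n : ℕ} (hn : 0 < n) (hn' : n ≤ 3) :
    IsCoprime (r₃.map (Int.castRingHom (ZMod 2))) (X ^ Nat.card (ZMod 2) ^ n - X) := by
  rw [map_r₃_zmod_two, Nat.card_zmod]
  interval_cases n
  · exact ⟨1, X ^ 6 + X ^ 4 + X ^ 3, by ring_nf; reduce_mod_char⟩
  · exact ⟨X ^ 3 + X + 1, X ^ 7 + X ^ 6 + X ^ 4 + X ^ 2 + 1, by ring_nf; reduce_mod_char⟩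
  · exact ⟨X ^ 6 + X ^ 3 + X ^ 2 + X + 1, X ^ 6 + X ^ 5 + X ^ 4 + X ^ 3 + X ^ 2 + X + 1,
      by ring_nf; reduce_mod_char⟩

theorem isCoprime_sextic_zmod_three {n : ℕ} (hn : 0 < n) (hn' : n ≤ 3) :
    IsCoprime (X ^ 6 - X ^ 3 - X - 1 : (ZMod 3)[X]) (X ^ Nat.card (ZMod 3) ^ n - X) := by
  rw [Nat.card_zmod]
  interval_cases n
  · exact ⟨X ^ 2 + X - 1, -X ^ 5 - X ^ 4 + X, by ring_nf; reduce_mod_char⟩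
  · exact ⟨X ^ 8 + X ^ 7 - X ^ 6 - X ^ 4 + X ^ 3 - X ^ 2 - X - 1,
      -X ^ 5 - X ^ 4 + X ^ 3 + X ^ 2 - X - 1, by ring_nf; reduce_mod_char⟩
  · exact ⟨-X ^ 23 - X ^ 22 - X ^ 20 - X ^ 19 - X ^ 18 + X ^ 16 + X ^ 15 + X ^ 14 - X ^ 13 - X ^ 11
      + X ^ 10 - X ^ 9 - X ^ 8 + X ^ 6 - X ^ 5 - X ^ 3 + X ^ 2 + X - 1, X ^ 2 + X,
      by ring_nf; reduce_mod_char⟩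

theorem natDegree_sextic_zmod_three : (X ^ 6 - X ^ 3 - X - 1 : (ZMod 3)[X]).natDegree = 6 := by
  compute_degree!

theorem irreducible_sextic_zmod_three : Irreducible (X ^ 6 - X ^ 3 - X - 1 : (ZMod 3)[X]) :=
  irreducible_of_isCoprime_X_pow_card_pow_sub_X (fun _ ↦ isCoprime_sextic_zmod_three)
    (by simp [natDegree_sextic_zmod_three]) (by simp [natDegree_sextic_zmod_three])

theorem irreducible_r₃ : Irreducible r₃ := by
  refine irreducible_of_map_of_map (n := 4) (Int.castRingHom (ZMod 2)) (Int.castRingHom (ZMod 3))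
    monic_r₃ natDegree_r₃.le (fun g hgr hg ↦ ?_) irreducible_sextic_zmod_three.prime ?_ ?_
  · exact lt_natDegree_of_isCoprime_X_pow_card_pow_sub_X (monic_r₃.map _).ne_zero
      (fun _ ↦ isCoprime_map_r₃_zmod_two) hgr hg
  · exact map_r₃_zmod_three ▸ dvd_mul_left _ _
  · simp [natDegree_sextic_zmod_three]

/- The discriminant `1097 * 4261 * 8677` of `r₃` is squarefree, so `ℤ[X] ⧸ (r₃, r₃')` is cyclic of
that order; `174970` and `-142593` form a short vector in the lattice of relations between the
classes of `X` and `1`. -/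
theorem linear_mem_span_r₃_derivative :
    C 174970 * X + C (-142593) ∈ Ideal.span {r₃, derivative r₃} := by
  refine Ideal.mem_span_pair.mpr ⟨-32384 * X ^ 6 + 373624 * X ^ 5 - 1580399 * X ^ 4
    + 2988924 * X ^ 3 - 2428156 * X ^ 2 + 613462 * X + 11147, 4048 * X ^ 7 - 55305 * X ^ 6
    + 287243 * X ^ 5 - 704985 * X ^ 4 + 823364 * X ^ 3 - 399872 * X ^ 2 + 47829 * X + 1959, ?_⟩
  rw [derivative_r₃, r₃, C_neg, C_ofNat, C_ofNat]
  ring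

end TheOctic

/-- The polynomial `r₃(x) = x⁸ − 17x⁷ + 117x⁶ − 418x⁵ + 827x⁴ − 898x³ + 502x² − 124x + 9`
is irreducible over `ℚ` and has Galois group `S₈` over `ℚ`. -/
theorem stmt_16 :
    Irreducible (X ^ 8 - 17 * X ^ 7 + 117 * X ^ 6 - 418 * X ^ 5 + 827 * X ^ 4 - 898 * X ^ 3
      + 502 * X ^ 2 - 124 * X + 9 : Polynomial ℚ) ∧
    Nonempty ((X ^ 8 - 17 * X ^ 7 + 117 * X ^ 6 - 418 * X ^ 5 + 827 * X ^ 4 - 898 * X ^ 3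
      + 502 * X ^ 2 - 124 * X + 9 : Polynomial ℚ).Gal ≃* Equiv.Perm (Fin 8)) := by
  have hirr : Irreducible (r₃.map (algebraMap ℤ ℚ)) :=
    monic_r₃.irreducible_iff_irreducible_map_fraction_map.mp irreducible_r₃
  have huv : IsCoprime (174970 : ℤ) (-142593) := by norm_num
  rw [← map_r₃ (algebraMap ℤ ℚ), ← natDegree_r₃]
  exact ⟨hirr, nonempty_gal_mulEquiv_perm_of_linear_mem_span monic_r₃ hirr huv
    linear_mem_span_r₃_derivative⟩
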